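/- Let m_N(θ) = N/(1−2θ) − (2N/(1−2θ))·1/(((1−θ)/θ)^N + 1) for θ ∈ (0,1)\{1/2}. Then m_N(θ)/N converges pointwise and monotonically (nondecreasing in N) to m̄(θ) = 1/|1−2θ| as N → ∞. -/

import Mathlib

open Filter Topology

/-- Expected exit time of the flat-potential (gambler's ruin) walk from `(-N, N)`. -/
noncomputable def mGR (N : ℕ) (θ : ℝ) : ℝ :=
  (N : ℝ) / (1 - 2 * θ) - (2 * (N : ℝ) / (1 - 2 * θ)) * (1 / (((1 - θ) / θ) ^ N + 1))

/-- `m_N(θ)/N` is nondecreasing in `N` and converges to `1/|1 - 2θ|`. -/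
theorem stmt18 (θ : ℝ) (h0 : 0 < θ) (h1 : θ < 1) (hh : θ ≠ 1 / 2) :
    Monotone (fun N : ℕ => mGR N θ / (N : ℝ)) ∧
    Tendsto (fun N : ℕ => mGR N θ / (N : ℝ)) atTop (𝓝 (1 / |1 - 2 * θ|)) := by
  have hr : 0 < (1 - θ) / θ := div_pos (by linarith) h0
  have hne : 1 - 2 * θ ≠ 0 := fun h => hh (by linarith)
  have key : (fun N : ℕ => mGR N θ / (N : ℝ)) =
      fun N : ℕ => (1 / (1 - 2 * θ)) * (1 - 2 * (((1 - θ) / θ) ^ N + 1)⁻¹) := by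
    funext N
    rcases Nat.eq_zero_or_pos N with rfl | hN
    · norm_num [mGR]
    · have hN' : (N : ℝ) ≠ 0 := by positivity
      unfold mGR
      generalize hx : ((1 - θ) / θ) ^ N = x
      have hxp : 0 < x := hx ▸ pow_pos hr N
      have : x + 1 ≠ 0 := by positivity
      field_simp
  rw [key]
  generalize hR : (1 - θ) / θ = r at *
  rcases lt_or_gt_of_ne hh with hlt | hgt
  · have hc : 0 < 1 - 2 * θ := by linarith
    have hr1 : 1 < r := by rw [← hR, lt_div_iff₀ h0]; linarith
    constructor
    · intro a b hab
      have h2 : r ^ a ≤ r ^ b := pow_le_pow_right₀ hr1.le hab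
      have h3 : 0 < r ^ a := pow_pos hr a
      have h4 : (r ^ b + 1)⁻¹ ≤ (r ^ a + 1)⁻¹ := inv_anti₀ (by linarith) (by linarith)
      exact mul_le_mul_of_nonneg_left (by linarith) (by positivity)
    · rw [abs_of_pos hc]
      have ht : Tendsto (fun N : ℕ => (r ^ N + 1)⁻¹) atTop (𝓝 0) :=
        (tendsto_atTop_add_const_right _ _ (tendsto_pow_atTop_atTop_of_one_lt hr1)).inv_tendsto_atTop
      have := ((ht.const_mul 2).const_sub 1).const_mul (1 / (1 - 2 * θ))
      simpa using this
  · have hc : 1 - 2 * θ < 0 := by linarith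
    have hr1 : r < 1 := by rw [← hR, div_lt_iff₀ h0]; linarith
    constructor
    · intro a b hab
      have h2 : r ^ b ≤ r ^ a := pow_le_pow_of_le_one hr.le hr1.le hab
      have h3 : 0 < r ^ b := pow_pos hr b
      have h4 : (r ^ a + 1)⁻¹ ≤ (r ^ b + 1)⁻¹ := inv_anti₀ (by linarith) (by linarith)
      exact mul_le_mul_of_nonpos_left (by linarith) (one_div_neg.2 hc).le
    · rw [abs_of_neg hc]
      have ht : Tendsto (fun N : ℕ => (r ^ N + 1)⁻¹) atTop (𝓝 (0 + 1)⁻¹) :=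
        ((tendsto_pow_atTop_nhds_zero_of_lt_one hr.le hr1).add_const 1).inv₀ (by norm_num)
      have := ((ht.const_mul 2).const_sub 1).const_mul (1 / (1 - 2 * θ))
      convert this using 2
      rw [one_div_neg_eq_neg_one_div]
      norm_num
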